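/- Let q = 2^n ≥ 4, let G = SL₂(F_q) over the field F_q with q elements, let P be a Sylow 2-subgroup of G, and let x ∈ P with x ≠ 1. Then: (1) any two nonidentity elements of P are conjugate in G; (2) there is exactly one irreducible complex character of G vanishing at x, and it has degree q; and (3) every other irreducible complex character of G has odd degree and takes value 1 or −1 at x. -/

import Mathlib

open Matrix
open scoped MatrixGroups

open CategoryTheory in
/-- The set of irreducible complex characters of `H`. -/
noncomputable def Irr (H : Type) [Group H] : Set (H → ℂ) :=
  {χ | ∃ V : FDRep ℂ H, Simple V ∧ χ = FDRep.character V}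

/-!
Let `U` be the group of upper unitriangular matrices and `1 ≠ u ∈ U`. In characteristic `2` two
nonidentity elements of `SL(2, F)` are conjugate as soon as they have the same trace, and
`2`-elements have trace `0`. So an irreducible character `χ` is constant on `U \ {1}`: its
restriction to `U` is `l` times the trivial character plus `c` times the sum of the others, whence
`χ u = l - c` and `χ 1 = l - c + q * c`. Here `c ≠ 0` unless `χ` is trivial, because `u` generates
`SL(2, F)` as a normal subgroup; and if `l ≠ 0` then the torus has an eigenvector among the
`U`-invariants, so `χ 1` is at most the index `q + 1` of the Borel subgroup.

Column orthogonality for `1` and `u` gives `∑ c ^ 2 = q`, and there are exactly `q` nontrivial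
irreducible characters, so `c = 1` for each of them. Hence `χ 1 = χ u + q` and, by the degree
bound, `χ u ∈ {0, 1, -1}`. Finally `∑ (1 - (χ u) ^ 2) = (q + 1) - q = 1`, so exactly one `χ`
vanishes at `u`.
-/

open Representation
open scoped MonoidAlgebra

section IrreducibleRepresentations

universe u v

open CategoryTheory in
theorem isIrreducible_of_simple {k : Type u} {G : Type v} [Field k] [Group G] (V : FDRep k G)
    [Simple V] : IsIrreducible V.ρ where
  exists_pair_ne := by
    refine ⟨⊥, ⊤, fun h => Simple.not_isZero V ((Limits.IsZero.iff_id_eq_zero V).mpr ?_)⟩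
    ext v
    have hv : v ∈ (⊤ : Subrepresentation V.ρ) := trivial
    rwa [← h] at hv
  eq_bot_or_eq_top σ := by
    let ι : FDRep.of σ.toRepresentation ⟶ V :=
      ⟨InducedCategory.homMk (ModuleCat.ofHom σ.toSubmodule.subtype), fun g => rfl⟩
    have hι : ∀ w : σ.toSubmodule, ι.hom w = (w : V) := fun w => rfl
    have : Mono ι := ConcreteCategory.mono_of_injective ι Subtype.val_injective
    by_cases h : ι = 0
    · left
      refine Subrepresentation.toSubmodule_injective ((Submodule.eq_bot_iff _).mpr fun v hv => ?_)
      have hv0 : ι.hom ⟨v, hv⟩ = 0 := by rw [h]; rfl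
      exact (hι _).symm.trans hv0
    · right
      have : IsIso ι := isIso_of_mono_of_nonzero h
      refine Subrepresentation.toSubmodule_injective (Submodule.eq_top_iff'.mpr fun v => ?_)
      have hv : ι.hom ((inv ι).hom v) = v :=
        ConcreteCategory.congr_hom (congrArg Action.Hom.hom (IsIso.inv_hom_id ι)) v
      rw [← hv]
      exact Subtype.prop _

theorem asAlgebraHom_ofModule' {k G M : Type*} [Field k] [Monoid G] [AddCommGroup M] [Module k M]
    [Module k[G] M] [IsScalarTower k k[G] M] :
    (ofModule' (k := k) (G := G) M).asAlgebraHom = Algebra.lsmul k k M :=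
  (MonoidAlgebra.lift k (Module.End k M) G).apply_symm_apply _

theorem isIrreducible_ofModule' {k G : Type*} [Field k] [Monoid G] (M : Type*) [AddCommGroup M]
    [Module k M] [Module k[G] M] [IsScalarTower k k[G] M] [IsSimpleModule k[G] M] :
    IsIrreducible (ofModule' (k := k) (G := G) M) := by
  rw [irreducible_iff_isSimpleModule_asModule]
  let e : (ofModule' (k := k) (G := G) M).asModule ≃ₗ[k[G]] M :=
    { (ofModule' (k := k) (G := G) M).asModuleEquiv.toAddEquiv with
      map_smul' := fun a m => by simp [asModuleEquiv_map_smul, asAlgebraHom_ofModule'] }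
  exact IsSimpleModule.congr e

theorem eq_zero_of_forall_asAlgebraHom_eq_zero {k G : Type u} [Field k] [Group G] [Finite G]
    [NeZero (Nat.card G : k)] {z : k[G]}
    (hz : ∀ (V : Type u) [AddCommGroup V] [Module k V] [FiniteDimensional k V]
      (ρ : Representation k G V), IsIrreducible ρ → ρ.asAlgebraHom z = 0) : z = 0 := by
  rw [← Submodule.mem_bot k[G], ← IsSemisimpleRing.jacobson_eq_bot,
    Ring.jacobson_eq_sInf_isMaximal, Submodule.mem_sInf]
  rintro I (hI : Ideal.IsMaximal I)
  have : IsSimpleModule k[G] (k[G] ⧸ I) := isSimpleModule_iff_isCoatom.mpr hI.out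
  have hzI := hz _ _ (isIrreducible_ofModule' (k := k) (G := G) (k[G] ⧸ I))
  rw [asAlgebraHom_ofModule'] at hzI
  simpa using (Submodule.Quotient.mk_eq_zero I).mp
    (LinearMap.congr_fun hzI (Submodule.Quotient.mk 1))

/-- Schur: a central `z` acts on `V` as a scalar, and that scalar is detected by the trace. -/
theorem asAlgebraHom_eq_zero_of_trace_eq_zero {k G V : Type*} [Field k] [CharZero k]
    [IsAlgClosed k] [Monoid G] [AddCommGroup V] [Module k V] [FiniteDimensional k V]
    {ρ : Representation k G V} [IsIrreducible ρ] {z : k[G]} (hz : z ∈ Subalgebra.center k k[G])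
    (htr : LinearMap.trace k V (ρ.asAlgebraHom z) = 0) : ρ.asAlgebraHom z = 0 := by
  let f : IntertwiningMap ρ ρ := ⟨ρ.asAlgebraHom z, fun g => by
    simpa [Module.End.mul_eq_comp] using
      congrArg ρ.asAlgebraHom (Subalgebra.mem_center_iff.mp hz (.single g 1)).symm⟩
  obtain ⟨c, hc⟩ := (IsIrreducible.algebraMap_intertwiningMap_bijective_of_isAlgClosed (ρ := ρ)).2 f
  have hcz : c • LinearMap.id = ρ.asAlgebraHom z := congrArg IntertwiningMap.toLinearMap hc
  have : Nontrivial V := IsSimpleModule.nontrivial k[G] ρ.asModule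
  rw [← hcz, map_smul, LinearMap.trace_id, smul_eq_mul, mul_eq_zero, Nat.cast_eq_zero,
    or_iff_left Module.finrank_pos.ne'] at htr
  rw [← hcz, htr, zero_smul]

end IrreducibleRepresentations

section CharacterOrthogonality

variable {G : Type} [Group G]

theorem Irr.apply_eq_of_isConj {χ : G → ℂ} (hχ : χ ∈ Irr G) {g h : G} (hgh : IsConj g h) :
    χ g = χ h := by
  obtain ⟨V, -, rfl⟩ := hχ
  obtain ⟨c, rfl⟩ := isConj_iff.mp hgh
  exact (V.char_conj g c).symm

theorem card_isConj_mul_card_centralizer (G : Type*) [Group G] (g : G) :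
    Nat.card {h // IsConj g h} * Nat.card (Subgroup.centralizer {g}) = Nat.card G := by
  have horbit : MulAction.orbit (ConjAct G) g = {h | IsConj g h} := by
    ext h
    exact ConjAct.mem_orbit_conjAct.trans isConj_comm
  have hindex : Nat.card {h // IsConj g h} = (MulAction.stabilizer (ConjAct G) g).index := by
    rw [MulAction.index_stabilizer, horbit, ← Nat.card_coe_set_eq]
    rfl
  rw [hindex, Subgroup.nat_card_centralizer_nat_card_stabilizer, Subgroup.index_mul_card]
  rfl

variable [Finite G]

theorem mem_irr_iff {χ : G → ℂ} : χ ∈ Irr G ↔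
    ∃ (V : Type) (_ : AddCommGroup V) (_ : Module ℂ V) (_ : FiniteDimensional ℂ V)
      (ρ : Representation ℂ G V), IsIrreducible ρ ∧ ρ.character = χ := by
  have := Fintype.ofFinite G
  constructor
  · rintro ⟨V, hV, rfl⟩
    exact ⟨V, inferInstance, inferInstance, inferInstance, V.ρ, isIrreducible_of_simple V, rfl⟩
  · rintro ⟨V, _, _, _, ρ, hρ, rfl⟩
    have := invertibleOfNonzero (NeZero.ne (Nat.card G : ℂ))
    refine ⟨FDRep.of ρ, (FDRep.simple_iff_char_is_norm_one _).mpr ?_, rfl⟩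
    have hnorm := card_inv_mul_sum_char_mul_char_eq_finrank ρ ρ
    rw [IsIrreducible.finrank_intertwiningMap_self, Nat.cast_one,
      inv_mul_eq_one₀ (NeZero.ne _)] at hnorm
    exact hnorm.symm

theorem Irr.one_mem : (1 : G → ℂ) ∈ Irr G := by
  have := Fintype.ofFinite G
  refine ⟨FDRep.of (Representation.trivial ℂ G ℂ), ?_, ?_⟩
  · rw [FDRep.simple_iff_char_is_norm_one]
    simp [FDRep.character]
  · ext g
    simp [FDRep.character]

omit [Finite G] in
open scoped Classical in
theorem Irr.sum_mul_inv [Fintype G] {χ ψ : G → ℂ} (hχ : χ ∈ Irr G) (hψ : ψ ∈ Irr G) :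
    ∑ g, χ g * ψ g⁻¹ = if χ = ψ then (Nat.card G : ℂ) else 0 := by
  obtain ⟨V, _, rfl⟩ := hχ
  obtain ⟨W, _, rfl⟩ := hψ
  split_ifs with h
  · rw [← h]
    exact (FDRep.simple_iff_char_is_norm_one V).mp inferInstance
  · have := invertibleOfNonzero (NeZero.ne (Nat.card G : ℂ))
    have horth := FDRep.char_orthonormal V W
    rw [if_neg fun ⟨e⟩ => h (FDRep.char_iso e)] at horth
    simpa using horth

theorem Irr.linearIndependent : LinearIndependent ℂ (Subtype.val : Irr G → G → ℂ) := by
  classical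
  have := Fintype.ofFinite G
  refine linearIndependent_iff'.mpr fun s c hc ψ hψ => ?_
  have hpair : ∑ χ ∈ s, c χ * ∑ g, χ.1 g * ψ.1 g⁻¹ = 0 := by
    have hval : ∀ g, ∑ χ ∈ s, c χ * χ.1 g = 0 := fun g => by
      simpa using congrFun hc g
    simp only [Finset.mul_sum, ← mul_assoc]
    rw [Finset.sum_comm]
    simp only [← Finset.sum_mul, hval, zero_mul, Finset.sum_const_zero]
  simpa [Irr.sum_mul_inv, hψ, SetCoe.ext_iff] using hpair

noncomputable instance Irr.fintype : Fintype (Irr G) :=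
  @Fintype.ofFinite _ Irr.linearIndependent.finite

theorem Irr.eq_one_of_forall_eq {χ : G → ℂ} (hχ : χ ∈ Irr G) (h : ∀ g, χ g = χ 1) : χ = 1 := by
  classical
  have := Fintype.ofFinite G
  by_contra hne
  have horth := Irr.sum_mul_inv hχ Irr.one_mem
  have hnorm := Irr.sum_mul_inv hχ hχ
  have hχ1 : χ 1 = 0 := by simpa [h, hne] using horth
  simp [h, hχ1, eq_comm] at hnorm

omit [Finite G] in
theorem Irr.eq_zero_of_forall_sum_mul_inv_eq_zero [Fintype G] {f : G → ℂ}
    (hf : ∀ g h, f (h * g * h⁻¹) = f g) (h : ∀ χ ∈ Irr G, ∑ g, f g * χ g⁻¹ = 0) : f = 0 := by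
  classical
  let z : ℂ[G] := ∑ g, .single g⁻¹ (f g)
  have hz : z ∈ Subalgebra.center ℂ ℂ[G] := by
    refine Subalgebra.mem_center_iff.mpr fun a => ?_
    induction a using MonoidAlgebra.induction_linear with
    | zero => simp
    | add a b ha hb => rw [add_mul, mul_add, ha, hb]
    | single k c =>
      simp only [z, Finset.mul_sum, Finset.sum_mul, MonoidAlgebra.single_mul_single]
      refine Fintype.sum_equiv (MulAut.conj k).toEquiv _ _ fun g => ?_
      have hconj : (k * g * k⁻¹)⁻¹ * k = k * g⁻¹ := by group
      simp only [MulEquiv.toEquiv_eq_coe, EquivLike.coe_coe, MulAut.conj_apply, hf, hconj, mul_comm]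
  have hz0 : z = 0 := eq_zero_of_forall_asAlgebraHom_eq_zero fun V _ _ _ ρ hρ => by
    refine asAlgebraHom_eq_zero_of_trace_eq_zero hz ?_
    simpa [z, Representation.character] using
      h ρ.character (mem_irr_iff.mpr ⟨V, _, _, ‹_›, ρ, hρ, rfl⟩)
  funext g
  have hcoeff : z.coeff g⁻¹ = 0 := by rw [hz0]; rfl
  simpa [z, MonoidAlgebra.coeff_sum, MonoidAlgebra.coeff_single, Finsupp.single_apply] using hcoeff

theorem Irr.card_mul_apply_eq_sum {G : Type} [Group G] [Fintype G] {f : G → ℂ}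
    (hf : ∀ g h, f (h * g * h⁻¹) = f g) (g : G) :
    Nat.card G * f g = ∑ χ : Irr G, (∑ h, f h * χ.1 h⁻¹) * χ.1 g := by
  classical
  let e : G → ℂ := fun g => Nat.card G * f g - ∑ χ : Irr G, (∑ h, f h * χ.1 h⁻¹) * χ.1 g
  have he : e = 0 := by
    refine Irr.eq_zero_of_forall_sum_mul_inv_eq_zero (fun g k => ?_) fun ψ hψ => ?_
    · have hχ (χ : Irr G) : χ.1 (k * g * k⁻¹) = χ.1 g :=
        (Irr.apply_eq_of_isConj χ.2 (isConj_iff.mpr ⟨k, rfl⟩)).symm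
      simp only [e, hf, hχ]
    · have hsum : ∑ g, (∑ χ : Irr G, (∑ h, f h * χ.1 h⁻¹) * χ.1 g) * ψ g⁻¹ =
          ∑ χ : Irr G, (∑ h, f h * χ.1 h⁻¹) * ∑ g, χ.1 g * ψ g⁻¹ := by
        simp only [Finset.sum_mul, Finset.mul_sum, mul_assoc]
        exact Finset.sum_comm
      have hrow (χ : Irr G) :
          ∑ g, χ.1 g * ψ g⁻¹ = if χ = ⟨ψ, hψ⟩ then (Nat.card G : ℂ) else 0 := by
        simpa only [Subtype.ext_iff] using Irr.sum_mul_inv χ.2 hψ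
      simp only [e, sub_mul, Finset.sum_sub_distrib, hsum, hrow, mul_assoc, ← Finset.mul_sum,
        mul_ite, mul_zero, Finset.sum_ite_eq', Finset.mem_univ, if_true]
      ring
  exact sub_eq_zero.mp (congrFun he g)

open scoped Classical in
theorem Irr.sum_inv_mul (g h : G) : ∑ χ : Irr G, χ.1 h⁻¹ * χ.1 g =
    if IsConj h g then (Nat.card (Subgroup.centralizer {h}) : ℂ) else 0 := by
  have := Fintype.ofFinite G
  have hclass := card_isConj_mul_card_centralizer G h
  have hinner (χ : Irr G) : ∑ k, (if IsConj h k then 1 else 0) * χ.1 k⁻¹ =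
      Nat.card {k // IsConj h k} * χ.1 h⁻¹ := by
    have hconst : ∀ k ∈ Finset.univ.filter (IsConj h), χ.1 k⁻¹ = χ.1 h⁻¹ := fun k hk =>
      have ⟨c, hc⟩ := isConj_iff.mp (Finset.mem_filter.mp hk).2
      (Irr.apply_eq_of_isConj χ.2 (isConj_iff.mpr ⟨c, by rw [← hc]; group⟩)).symm
    simp only [ite_mul, one_mul, zero_mul, ← Finset.sum_filter]
    rw [Finset.sum_congr rfl hconst, Finset.sum_const, nsmul_eq_mul, Nat.card_eq_fintype_card,
      Fintype.card_subtype]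
  have hexpand := Irr.card_mul_apply_eq_sum (f := fun k => if IsConj h k then 1 else 0)
    (fun k c => if_congr ⟨fun hk => hk.trans (isConj_iff.mpr ⟨c⁻¹, by group⟩),
      fun hk => hk.trans (isConj_iff.mpr ⟨c, rfl⟩)⟩ rfl rfl) g
  have hne : (Nat.card {k // IsConj h k} : ℂ) ≠ 0 :=
    Nat.cast_ne_zero.mpr fun h0 => Nat.card_pos.ne' (hclass.symm.trans (by rw [h0, zero_mul]))
  refine mul_left_cancel₀ hne ?_
  simp only [hinner, mul_assoc, ← Finset.mul_sum, ← hclass, Nat.cast_mul] at hexpand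
  rw [← hexpand, mul_ite, mul_one, mul_zero]
  split_ifs <;> simp

theorem sum_card_centralizer (G : Type*) [Group G] [Fintype G] :
    ∑ g : G, Nat.card (Subgroup.centralizer {g}) = Nat.card (ConjClasses G) * Nat.card G := by
  rw [← card_comm_eq_card_conjClasses_mul_card, ← Nat.card_sigma]
  exact Nat.card_congr
    { toFun p := ⟨(p.1, p.2.1), (Subgroup.mem_centralizer_singleton_iff.mp p.2.2).symm⟩
      invFun p := ⟨p.1.1, p.1.2, Subgroup.mem_centralizer_singleton_iff.mpr p.2.eq.symm⟩
      left_inv _ := rfl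
      right_inv _ := rfl }

theorem Irr.card_eq : Fintype.card (Irr G) = Nat.card (ConjClasses G) := by
  classical
  have := Fintype.ofFinite G
  have hnorm (χ : Irr G) : ∑ g, χ.1 g⁻¹ * χ.1 g = Nat.card G := by
    simpa [mul_comm] using Irr.sum_mul_inv χ.2 χ.2
  have hcount : (Fintype.card (Irr G) * Nat.card G : ℂ) =
      (∑ g : G, Nat.card (Subgroup.centralizer {g}) : ℕ) :=
    calc (Fintype.card (Irr G) * Nat.card G : ℂ)
      _ = ∑ χ : Irr G, ∑ g, χ.1 g⁻¹ * χ.1 g := by simp [hnorm]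
      _ = (∑ g : G, Nat.card (Subgroup.centralizer {g}) : ℕ) := by
        rw [Finset.sum_comm]
        simp only [Irr.sum_inv_mul, IsConj.refl, if_true, Nat.cast_sum]
  refine Nat.eq_of_mul_eq_mul_right (Nat.card_pos (α := G)) ?_
  rw [← sum_card_centralizer]
  exact_mod_cast hcount

end CharacterOrthogonality

section Representations

theorem exists_trace_eq_finrank_sub_two_mul {k V : Type*} [Field k] [NeZero (2 : k)]
    [AddCommGroup V] [Module k V] [FiniteDimensional k V] {f : Module.End k V} (hf : f * f = 1) :
    ∃ m : ℕ, LinearMap.trace k V f = Module.finrank k V - 2 * m ∧ (m = 0 → f = 1) := by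
  let e : Module.End k V := (2 : k)⁻¹ • (1 - f)
  have hfe : f = 1 - (2 : k) • e := by simp [e, smul_smul, NeZero.ne]
  have he : IsIdempotentElem e := by
    have hsq : (1 - f) * (1 - f) = (2 : k) • (1 - f) := by
      rw [two_smul, mul_sub, sub_mul, sub_mul, hf, one_mul, one_mul, mul_one]
      abel
    rw [IsIdempotentElem, smul_mul_smul_comm, hsq, smul_smul,
      inv_mul_cancel_right₀ (NeZero.ne _)]
  refine ⟨Module.finrank k (LinearMap.range e), ?_, fun h0 => ?_⟩
  · rw [← ((LinearMap.isProj_range_iff_isIdempotentElem e).mpr he).trace]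
    conv_lhs => rw [hfe]
    rw [map_sub, map_smul, LinearMap.trace_one, smul_eq_mul]
  · rw [Submodule.finrank_eq_zero, LinearMap.range_eq_bot] at h0
    rw [hfe, h0, smul_zero, sub_zero]

theorem exists_ne_zero_forall_apply_mem_span_of_isCyclic {k A V : Type*} [Field k] [IsAlgClosed k]
    [Group A] [Finite A] [IsCyclic A] [AddCommGroup V] [Module k V] [FiniteDimensional k V]
    [Nontrivial V] (ρ : Representation k A V) : ∃ v ≠ 0, ∀ a, ρ a v ∈ Submodule.span k {v} := by
  obtain ⟨z, hz⟩ := IsCyclic.exists_generator (α := A)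
  obtain ⟨c, hc⟩ := Module.End.exists_eigenvalue (ρ z)
  obtain ⟨v, hv⟩ := hc.exists_hasEigenvector
  refine ⟨v, hv.2, fun a => ?_⟩
  obtain ⟨n, rfl⟩ := mem_powers_iff_mem_zpowers.mpr (hz a)
  simp only [map_pow, hv.pow_apply]
  exact Submodule.smul_mem _ _ (Submodule.mem_span_singleton_self v)

theorem span_range_apply_eq_top {k G V : Type*} [Field k] [Monoid G] [AddCommGroup V] [Module k V]
    (ρ : Representation k G V) [IsIrreducible ρ] {v : V} (hv : v ≠ 0) :
    Submodule.span k (Set.range fun g => ρ g v) = ⊤ := by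
  let T : Subrepresentation ρ := ⟨Submodule.span k (Set.range fun g => ρ g v), fun g x hx => by
    have hmap : (Submodule.span k (Set.range fun g => ρ g v)).map (ρ g) ≤
        Submodule.span k (Set.range fun g => ρ g v) := by
      rw [Submodule.map_span, Submodule.span_le]
      rintro _ ⟨_, ⟨h, rfl⟩, rfl⟩
      exact Submodule.subset_span ⟨g * h, by simp⟩
    exact hmap (Submodule.mem_map_of_mem hx)⟩
  have hvT : v ∈ T.toSubmodule := Submodule.subset_span ⟨1, by simp⟩
  rcases eq_bot_or_eq_top T with hT | hT
  · rw [hT] at hvT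
    exact absurd ((Submodule.mem_bot k).mp hvT) hv
  · exact congrArg Subrepresentation.toSubmodule hT

theorem finrank_le_index {k G V : Type*} [Field k] [Group G] [AddCommGroup V] [Module k V]
    (ρ : Representation k G V) [IsIrreducible ρ] {v : V} (hv : v ≠ 0) (H : Subgroup G)
    [H.FiniteIndex] (hH : ∀ h ∈ H, ρ h v ∈ Submodule.span k {v}) :
    Module.finrank k V ≤ H.index := by
  have := H.fintypeQuotientOfFiniteIndex
  let w : G ⧸ H → V := fun x => ρ x.out v
  have hspan : Submodule.span k (Set.range w) = ⊤ := by
    rw [eq_top_iff, ← span_range_apply_eq_top ρ hv, Submodule.span_le]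
    rintro _ ⟨g, rfl⟩
    obtain ⟨h, hh⟩ := QuotientGroup.mk_out_eq_mul H g
    obtain ⟨c, hc⟩ := Submodule.mem_span_singleton.mp (hH _ (H.inv_mem h.2))
    have hg : ρ g v = c • w g := by
      rw [← map_smul, hc, hh, ← Module.End.mul_apply, ← map_mul, mul_inv_cancel_right]
    rw [SetLike.mem_coe]
    simp only [hg]
    exact Submodule.smul_mem _ _ (Submodule.subset_span ⟨_, rfl⟩)
  rw [← finrank_top, ← hspan, Subgroup.index_eq_card, Nat.card_eq_fintype_card]
  exact finrank_range_le_card w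

end Representations

section SpecialLinearGroup

theorem trace_eq_of_isConj {n R : Type*} [Fintype n] [DecidableEq n] [CommRing R]
    {g h : SpecialLinearGroup n R} (hgh : IsConj g h) :
    (g : Matrix n n R).trace = (h : Matrix n n R).trace := by
  obtain ⟨k, rfl⟩ := isConj_iff.mp hgh
  exact (Matrix.trace_units_conj (SpecialLinearGroup.toGL k) (g : Matrix n n R)).symm

theorem card_specialLinearGroup_mul_card_units {n R : Type*} [Fintype n] [DecidableEq n]
    [Nonempty n] [CommRing R] :
    Nat.card (SpecialLinearGroup n R) * Nat.card Rˣ = Nat.card (GL n R) := by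
  have hker : Nat.card (SpecialLinearGroup n R) =
      Nat.card (GeneralLinearGroup.det (n := n) (R := R)).ker := by
    rw [← Nat.card_range_of_injective SpecialLinearGroup.toGL_injective,
      SpecialLinearGroup.range_toGL]
    rfl
  rw [hker, ← Subgroup.card_mul_index (GeneralLinearGroup.det (n := n) (R := R)).ker,
    Subgroup.index_ker, MonoidHom.range_eq_top.mpr GeneralLinearGroup.det_surjective,
    Subgroup.card_top]

theorem trace_eq_card_of_pow_char_pow_eq_one {n R : Type*} [Fintype n] [DecidableEq n]
    [CommRing R] [IsReduced R] {p : ℕ} [Fact p.Prime] [CharP R p] {M : Matrix n n R} {k : ℕ}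
    (hM : M ^ p ^ k = 1) : M.trace = Fintype.card n := by
  cases isEmpty_or_nonempty n
  · simp
  · have hnil : IsNilpotent (M - 1) := by
      refine ⟨p ^ k, ?_⟩
      rw [sub_pow_char_pow_of_commute p k (Commute.one_right M), hM, one_pow, sub_self]
    have htr := (Matrix.isNilpotent_trace_of_isNilpotent hnil).eq_zero
    rwa [Matrix.trace_sub, Matrix.trace_one, sub_eq_zero] at htr

variable {F : Type*} [Field F]

/-- The upper unitriangular subgroup of `SL(2, F)`, as a homomorphism from the additive group
of `F`. -/
def unipotent : Multiplicative F →* SL(2, F) where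
  toFun b := SpecialLinearGroup.transvection zero_ne_one b.toAdd
  map_one' := SpecialLinearGroup.transvection_coeff_zero _
  map_mul' _ _ := SpecialLinearGroup.transvection_add _ _ _

/-- The diagonal torus of `SL(2, F)`, as a homomorphism from the unit group of `F`. -/
noncomputable def torus : Fˣ →* SL(2, F) where
  toFun a := SpecialLinearGroup.diag2 (a : F) a.ne_zero
  map_one' := Subtype.ext (by simp [SpecialLinearGroup.diag2_coe', Matrix.one_fin_two])
  map_mul' a b := Subtype.ext (by simp [SpecialLinearGroup.diag2_coe', mul_comm])

/-- The companion matrix of `X ^ 2 - t * X + 1`. Over a perfect field of characteristic `2` it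
represents the unique conjugacy class of nonidentity elements of trace `t`. -/
def companion (t : F) : SL(2, F) :=
  ⟨!![0, -1; 1, t], by simp⟩

/-- The Borel subgroup of `SL(2, F)`, encoded as the stabilizer of the line spanned by the first
basis vector. -/
def borelSubgroup (F : Type*) [Field F] : Subgroup SL(2, F) :=
  MulAction.stabilizer SL(2, F)
    (Projectivization.mk F (Pi.single 0 1 : Fin 2 → F) (Pi.single_ne_zero_iff.mpr one_ne_zero))

theorem coe_unipotent (b : Multiplicative F) :
    (unipotent b : Matrix (Fin 2) (Fin 2) F) = !![1, b.toAdd; 0, 1] := by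
  ext i j
  fin_cases i <;> fin_cases j <;> simp [unipotent, SpecialLinearGroup.transvection_coe]

theorem coe_torus (a : Fˣ) :
    (torus a : Matrix (Fin 2) (Fin 2) F) = !![(a : F), 0; 0, (a : F)⁻¹] :=
  SpecialLinearGroup.diag2_coe' a.ne_zero

theorem coe_companion (t : F) : (companion t : Matrix (Fin 2) (Fin 2) F) = !![0, -1; 1, t] :=
  rfl

theorem unipotent_injective : Function.Injective (unipotent (F := F)) := fun a b h => by
  simpa [coe_unipotent] using congrArg (fun g : SL(2, F) => g 0 1) h

theorem trace_companion (t : F) : (companion t : Matrix (Fin 2) (Fin 2) F).trace = t := by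
  rw [coe_companion, Matrix.trace_fin_two_of, zero_add]

theorem companion_ne_one (t : F) : companion t ≠ 1 := fun h => by
  simpa [coe_companion] using congrArg (fun g : SL(2, F) => g 1 0) h

theorem companion_eq_mul_unipotent (t : F) :
    companion t = companion 0 * unipotent (.ofAdd t) := by
  apply Subtype.ext
  simp [coe_companion, coe_unipotent]

theorem unipotent_mul_torus (a : Fˣ) (b : F) :
    unipotent (.ofAdd b) * torus a =
      torus a * unipotent (.ofAdd ((a : F)⁻¹ ^ 2 * b)) := by
  apply Subtype.ext
  have hb : b * (a : F)⁻¹ = a * ((a : F)⁻¹ ^ 2 * b) := by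
    field_simp
  simpa [coe_torus, coe_unipotent] using hb

theorem apply_one_zero_of_mem_borelSubgroup {g : SL(2, F)} (hg : g ∈ borelSubgroup F) :
    g 1 0 = 0 := by
  obtain ⟨c, hc⟩ :=
    (Projectivization.mk_eq_mk_iff' F _ _ _ _).mp (MulAction.mem_stabilizer_iff.mp hg)
  have hfix : ((g : Matrix (Fin 2) (Fin 2) F) *ᵥ Pi.single 0 1) 1 = 0 :=
    (congrFun hc 1).symm.trans (by simp)
  rwa [Matrix.mulVec_single_one] at hfix

theorem exists_eq_torus_mul_unipotent {g : SL(2, F)} (hg : g ∈ borelSubgroup F) :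
    ∃ a b, g = torus a * unipotent b := by
  obtain ⟨a, b, ha, rfl⟩ := SpecialLinearGroup.fin_two_exists_eq_mk_of_apply_zero_one_eq_zero g
    (apply_one_zero_of_mem_borelSubgroup hg)
  refine ⟨Units.mk0 a ha, .ofAdd (a⁻¹ * b), Subtype.ext ?_⟩
  simp [coe_torus, coe_unipotent, ha]

theorem index_borelSubgroup [Finite F] : (borelSubgroup F).index = Nat.card F + 1 := by
  rw [borelSubgroup, MulAction.index_stabilizer_of_transitive,
    Projectivization.card_of_finrank_two F _ (Module.finrank_fin_fun F)]

theorem card_SL_two_add_card [Finite F] :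
    Nat.card SL(2, F) + Nat.card F = Nat.card F ^ 3 := by
  have := Fintype.ofFinite F
  have hGL := card_specialLinearGroup_mul_card_units (n := Fin 2) (R := F)
  have hq : 1 < Nat.card F := Finite.one_lt_card
  rw [card_GL_field, Fin.prod_univ_two, Nat.card_units, ← Nat.card_eq_fintype_card, Fin.val_zero,
    Fin.val_one, pow_zero, pow_one] at hGL
  have hG : (Nat.card SL(2, F) + Nat.card F) * (Nat.card F - 1) =
      Nat.card F ^ 3 * (Nat.card F - 1) := by
    zify [hq.le, Nat.one_le_pow 2 (Nat.card F) Nat.card_pos,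
      Nat.le_self_pow two_ne_zero (Nat.card F)] at hGL ⊢
    linear_combination hGL
  exact Nat.eq_of_mul_eq_mul_right (Nat.sub_pos_of_lt hq) hG

-- In the basis `v, g v` the matrix `g` becomes `companion (trace g)`, by Cayley–Hamilton.
theorem isConj_companion_trace_of_det_eq_one {g : SL(2, F)} {v : Fin 2 → F}
    (hv : v 0 * (g.1 *ᵥ v) 1 - (g.1 *ᵥ v) 0 * v 1 = 1) :
    IsConj (companion (g : Matrix (Fin 2) (Fin 2) F).trace) g := by
  let k : SL(2, F) := ⟨!![v 0, (g.1 *ᵥ v) 0; v 1, (g.1 *ᵥ v) 1], by rwa [Matrix.det_fin_two_of]⟩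
  refine isConj_iff.mpr ⟨k, mul_inv_eq_iff_eq_mul.mpr (Subtype.ext ?_)⟩
  have hdet : g.1 0 0 * g.1 1 1 - g.1 0 1 * g.1 1 0 = 1 := by rw [← Matrix.det_fin_two, g.2]
  have hcol (i : Fin 2) : (g.1 *ᵥ v) i = g.1 i 0 * v 0 + g.1 i 1 * v 1 := by
    simp [Matrix.mulVec_eq_sum, mul_comm]
  change !![v 0, (g.1 *ᵥ v) 0; v 1, (g.1 *ᵥ v) 1] * !![0, -1; 1, g.1.trace] =
    g.1 * !![v 0, (g.1 *ᵥ v) 0; v 1, (g.1 *ᵥ v) 1]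
  simp only [hcol, Matrix.trace_fin_two, ← Matrix.ext_iff, Fin.forall_fin_two, Matrix.mul_apply,
    Fin.sum_univ_two, of_apply, cons_val_zero, cons_val_one]
  refine ⟨⟨by ring, ?_⟩, by ring, ?_⟩
  · linear_combination v 0 * hdet
  · linear_combination v 1 * hdet

section CharTwo

variable [CharP F 2]

theorem isConj_companion_trace [PerfectRing F 2] {g : SL(2, F)} (hg : g ≠ 1) :
    IsConj (companion (g : Matrix (Fin 2) (Fin 2) F).trace) g := by
  induction g using SpecialLinearGroup.fin_two_induction with | h a b c d hdet =>
  obtain ⟨p, r, hpr⟩ : ∃ p r : F, p * (c * p + d * r) - (a * p + b * r) * r ≠ 0 := by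
    by_contra! hQ
    have hc : c = 0 := by simpa using hQ 1 0
    have hb : b = 0 := by simpa using hQ 0 1
    have hda : d = a := by simpa [hb, hc, sub_eq_zero] using hQ 1 1
    have ha : a = 1 := by
      rw [hc, hda] at hdet
      exact frobenius_inj F 2 (by simp only [frobenius_def]; linear_combination hdet)
    exact hg (Subtype.ext (by simp [ha, hb, hc, hda, Matrix.one_fin_two]))
  obtain ⟨s, hs⟩ := surjective_frobenius F 2 (p * (c * p + d * r) - (a * p + b * r) * r)⁻¹
  have hdet' : s ^ 2 * (p * (c * p + d * r) - (a * p + b * r) * r) = 1 := by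
    rw [← frobenius_def, hs, inv_mul_cancel₀ hpr]
  apply isConj_companion_trace_of_det_eq_one (v := ![s * p, s * r])
  simp only [Matrix.mulVec, dotProduct, Fin.sum_univ_two, of_apply, cons_val_zero, cons_val_one]
  linear_combination hdet'

theorem isConj_of_trace_eq [PerfectRing F 2] {g h : SL(2, F)} (hg : g ≠ 1) (hh : h ≠ 1)
    (hgh : (g : Matrix (Fin 2) (Fin 2) F).trace = (h : Matrix (Fin 2) (Fin 2) F).trace) :
    IsConj g h :=
  (isConj_companion_trace hg).symm.trans (hgh ▸ isConj_companion_trace hh)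

theorem card_conjClasses_SL_two [Finite F] :
    Nat.card (ConjClasses SL(2, F)) = Nat.card F + 1 := by
  let f : Option F → ConjClasses SL(2, F) := fun o => .mk (o.elim 1 companion)
  rw [← Finite.card_option]
  refine (Nat.card_eq_of_bijective f ⟨?_, fun C => ?_⟩).symm
  · rintro (_ | s) (_ | t) hst <;> have h := ConjClasses.mk_eq_mk_iff_isConj.mp hst
    · rfl
    · exact absurd (isConj_one_right.mp h) (companion_ne_one t)
    · exact absurd (isConj_one_left.mp h) (companion_ne_one s)
    · simpa [trace_companion] using trace_eq_of_isConj h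
  · obtain ⟨g, rfl⟩ := ConjClasses.mk_surjective C
    rcases eq_or_ne g 1 with rfl | hg
    · exact ⟨none, rfl⟩
    · exact ⟨some _, ConjClasses.mk_eq_mk_iff_isConj.mpr (isConj_companion_trace hg)⟩

theorem trace_unipotent (b : Multiplicative F) :
    (unipotent b : Matrix (Fin 2) (Fin 2) F).trace = 0 := by
  rw [coe_unipotent, Matrix.trace_fin_two_of, CharTwo.add_self_eq_zero]

theorem isConj_unipotent [PerfectRing F 2] {b : Multiplicative F} (hb : b ≠ 1) {g : SL(2, F)}
    (hg : g ≠ 1) (htr : (g : Matrix (Fin 2) (Fin 2) F).trace = 0) : IsConj (unipotent b) g :=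
  isConj_of_trace_eq ((map_ne_one_iff unipotent unipotent_injective).mpr hb) hg
    (by rw [trace_unipotent, htr])

theorem unipotent_mul_self (b : Multiplicative F) : unipotent b * unipotent b = 1 := by
  rw [← map_mul, ← map_one unipotent]
  exact congrArg unipotent (CharTwo.add_self_eq_zero b.toAdd)

theorem centralizer_unipotent {b : Multiplicative F} (hb : b ≠ 1) :
    Subgroup.centralizer {unipotent b} = (unipotent (F := F)).range := by
  ext k
  rw [Subgroup.mem_centralizer_singleton_iff, MonoidHom.mem_range]
  refine ⟨fun hk => ?_, ?_⟩
  · induction k using SpecialLinearGroup.fin_two_induction with | h p q r s hdet =>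
    have hmat : (!![p, q; r, s] : Matrix (Fin 2) (Fin 2) F) * !![1, b.toAdd; 0, 1] =
        !![1, b.toAdd; 0, 1] * !![p, q; r, s] := by
      rw [← coe_unipotent]
      exact congrArg Subtype.val hk
    have hb0 : b.toAdd ≠ 0 := hb
    have hr : r = 0 := by
      have h00 : p = p + b.toAdd * r := by simpa using congrFun₂ hmat 0 0
      exact (mul_eq_zero.mp (left_eq_add.mp h00)).resolve_left hb0
    have hps : p = s := by
      have h01 : p * b.toAdd + q = q + b.toAdd * s := by simpa using congrFun₂ hmat 0 1
      exact mul_right_cancel₀ hb0 (by linear_combination h01)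
    have hp : p = 1 := by
      rw [hr, ← hps] at hdet
      exact frobenius_inj F 2 (by simp only [frobenius_def]; linear_combination hdet)
    exact ⟨.ofAdd q, Subtype.ext (by simp [coe_unipotent, ← hps, hp, hr])⟩
  · rintro ⟨a, rfl⟩
    rw [← map_mul, ← map_mul, mul_comm]

theorem card_centralizer_unipotent {b : Multiplicative F} (hb : b ≠ 1) :
    Nat.card (Subgroup.centralizer {unipotent b}) = Nat.card F := by
  rw [centralizer_unipotent hb, ← Nat.card_congr Multiplicative.toAdd]
  exact (Nat.card_congr (MonoidHom.ofInjective unipotent_injective).toEquiv).symm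

theorem eq_top_of_unipotent_mem [PerfectRing F 2] {N : Subgroup SL(2, F)} [hN : N.Normal]
    {b : Multiplicative F} (hb : b ≠ 1) (hbN : unipotent b ∈ N) : N = ⊤ := by
  have mem_of_isConj {g h : SL(2, F)} (hgh : IsConj g h) (hg : g ∈ N) : h ∈ N := by
    obtain ⟨k, rfl⟩ := isConj_iff.mp hgh
    exact hN.conj_mem g hg k
  have mem_of_trace_eq_zero {g : SL(2, F)} (hg : (g : Matrix (Fin 2) (Fin 2) F).trace = 0) :
      g ∈ N := by
    rcases eq_or_ne g 1 with rfl | hg1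
    · exact N.one_mem
    · exact mem_of_isConj (isConj_unipotent hb hg1 hg) hbN
  refine eq_top_iff.mpr fun g _ => ?_
  rcases eq_or_ne g 1 with rfl | hg1
  · exact N.one_mem
  · refine mem_of_isConj (isConj_companion_trace hg1) ?_
    rw [companion_eq_mul_unipotent]
    exact N.mul_mem (mem_of_trace_eq_zero (trace_companion 0))
      (mem_of_trace_eq_zero (trace_unipotent _))

theorem trace_eq_zero_of_isPGroup {P : Subgroup SL(2, F)} (hP : IsPGroup 2 P) {g : SL(2, F)}
    (hg : g ∈ P) : (g : Matrix (Fin 2) (Fin 2) F).trace = 0 := by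
  obtain ⟨k, hk⟩ := hP ⟨g, hg⟩
  have hpow : (g : Matrix (Fin 2) (Fin 2) F) ^ 2 ^ k = 1 :=
    congrArg (fun x : P => (x.1 : Matrix (Fin 2) (Fin 2) F)) hk
  rw [trace_eq_card_of_pow_char_pow_eq_one hpow, Fintype.card_fin, CharP.cast_eq_zero]

end CharTwo

end SpecialLinearGroup

section UnipotentCharacterValues

theorem finrank_le_of_invariants_unipotent_ne_bot {k F V : Type*} [Field k] [IsAlgClosed k]
    [Field F] [Finite F] [AddCommGroup V] [Module k V] [FiniteDimensional k V]
    (ρ : Representation k SL(2, F) V) [IsIrreducible ρ]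
    (hinv : invariants (ρ.comp unipotent) ≠ ⊥) : Module.finrank k V ≤ Nat.card F + 1 := by
  let W := invariants (ρ.comp unipotent)
  have hstab (a : Fˣ) : ∀ v ∈ W, ρ (torus a) v ∈ W := fun v hv b => by
    change ρ (unipotent b) (ρ (torus a) v) = ρ (torus a) v
    rw [← Module.End.mul_apply, ← map_mul, ← ofAdd_toAdd b, unipotent_mul_torus, map_mul,
      Module.End.mul_apply]
    exact congrArg (ρ (torus a)) (hv _)
  let σ : Representation k Fˣ W :=
    { toFun := fun a => (ρ (torus a)).restrict (hstab a)
      map_one' := by ext; simp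
      map_mul' := fun a b => by ext; simp }
  have : Nontrivial W := Submodule.nontrivial_iff_ne_bot.mpr hinv
  obtain ⟨⟨v, hvW⟩, hv0, hv⟩ := exists_ne_zero_forall_apply_mem_span_of_isCyclic σ
  have : (borelSubgroup F).FiniteIndex := ⟨by simp [index_borelSubgroup]⟩
  rw [← index_borelSubgroup]
  refine finrank_le_index ρ (fun h => hv0 (Subtype.ext h)) (borelSubgroup F) fun g hg => ?_
  obtain ⟨a, b, rfl⟩ := exists_eq_torus_mul_unipotent hg
  obtain ⟨c, hc⟩ := Submodule.mem_span_singleton.mp (hv a)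
  refine Submodule.mem_span_singleton.mpr ⟨c, (congrArg Subtype.val hc).trans ?_⟩
  rw [map_mul, Module.End.mul_apply]
  exact congrArg (ρ (torus a)) (hvW b).symm

theorem card_mul_finrank_invariants_unipotent {k F V : Type*} [Field k] [Field F] [Finite F]
    [CharP F 2] [NeZero (Nat.card F : k)] [AddCommGroup V] [Module k V] [FiniteDimensional k V]
    (ρ : Representation k SL(2, F) V) {b : Multiplicative F} (hb : b ≠ 1) :
    (Nat.card F : k) * Module.finrank k (invariants (ρ.comp unipotent)) =
      Module.finrank k V + (Nat.card F - 1) * ρ.character (unipotent b) := by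
  classical
  have := Fintype.ofFinite F
  have hcard : Nat.card (Multiplicative F) = Nat.card F := Nat.card_congr Multiplicative.toAdd
  have hne : (Nat.card (Multiplicative F) : k) ≠ 0 := by rw [hcard]; exact NeZero.ne _
  have := invertibleOfNonzero hne
  have hconst : ∀ c ∈ Finset.univ.erase (1 : Multiplicative F),
      character (ρ.comp unipotent) c = ρ.character (unipotent b) := fun c hc => by
    have hc1 := (map_ne_one_iff unipotent unipotent_injective).mpr (Finset.ne_of_mem_erase hc)
    obtain ⟨k, hk⟩ := isConj_iff.mp (isConj_unipotent hb hc1 (trace_unipotent c))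
    rw [← char_conj ρ _ k, hk]
    rfl
  have hsum := card_inv_mul_sum_char_eq_finrank (ρ.comp unipotent)
  rw [inv_mul_eq_iff_eq_mul₀ hne, ← Finset.add_sum_erase _ _ (Finset.mem_univ 1),
    Finset.sum_congr rfl hconst, Finset.sum_const, Finset.card_erase_of_mem (Finset.mem_univ _),
    Finset.card_univ, ← Nat.card_eq_fintype_card, char_one, nsmul_eq_mul,
    Nat.cast_sub Nat.card_pos, Nat.cast_one, hcard] at hsum
  exact hsum.symm

variable {F : Type} [Field F] [Finite F] [CharP F 2] {b : Multiplicative F}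

/-- Here `χ` restricts to the unitriangular subgroup as `l` times the trivial character plus `c`
times the sum of the others. -/
theorem Irr.exists_apply_unipotent_eq {χ : SL(2, F) → ℂ} (hχ : χ ∈ Irr SL(2, F)) (hb : b ≠ 1) :
    ∃ l c : ℕ, χ (unipotent b) = l - c ∧ χ 1 = l - c + Nat.card F * c ∧
      (c = 0 → χ = 1) ∧ (l ≠ 0 → l + Nat.card F * c ≤ Nat.card F + 1 + c) := by
  obtain ⟨V, _, _, _, ρ, hρ, rfl⟩ := mem_irr_iff.mp hχ
  have hsq : ρ (unipotent b) * ρ (unipotent b) = 1 := by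
    rw [← map_mul, unipotent_mul_self, map_one]
  obtain ⟨m, hm, hm0⟩ := exists_trace_eq_finrank_sub_two_mul hsq
  let l := Module.finrank ℂ (invariants (ρ.comp unipotent))
  have hl : (Nat.card F : ℂ) * l =
      Module.finrank ℂ V + (Nat.card F - 1) * (Module.finrank ℂ V - 2 * m) :=
    hm ▸ card_mul_finrank_invariants_unipotent ρ hb
  have hq : (0 : ℤ) < Nat.card F := mod_cast Nat.card_pos
  have hqm : (Nat.card F : ℤ) * (l - Module.finrank ℂ V + 2 * m) = 2 * m := by
    have hl' : (Nat.card F : ℤ) * l =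
      Module.finrank ℂ V + (Nat.card F - 1) * (Module.finrank ℂ V - 2 * m) := mod_cast hl
    linear_combination hl'
  obtain ⟨c, hc⟩ : ∃ c : ℕ, (l - Module.finrank ℂ V + 2 * m : ℤ) = c :=
    Int.eq_ofNat_of_zero_le (nonneg_of_mul_nonneg_right (by rw [hqm]; positivity) hq)
  rw [hc] at hqm
  have hd : (Module.finrank ℂ V : ℤ) = l - c + Nat.card F * c := by linear_combination -hqm - hc
  refine ⟨l, c, hm.trans ?_, (char_one ρ).trans (mod_cast hd), fun hc0 => ?_, fun hl0 => ?_⟩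
  · have hc' : (l - Module.finrank ℂ V + 2 * m : ℂ) = c := mod_cast hc
    linear_combination -hc'
  · have hu : ρ (unipotent b) = 1 := hm0 (by simpa [hc0] using hqm.symm)
    have hker := eq_top_of_unipotent_mem (N := MonoidHom.ker ρ) hb hu
    have hρ1 (g) : ρ g = 1 := MonoidHom.mem_ker.mp (hker ▸ Subgroup.mem_top g)
    exact Irr.eq_one_of_forall_eq hχ fun g => by simp only [Representation.character, hρ1]
  · have hle := finrank_le_of_invariants_unipotent_ne_bot ρ
      (fun h => hl0 (Submodule.finrank_eq_zero.mpr h))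
    zify at hle ⊢
    linear_combination hle - hd

theorem Irr.sum_sq_apply_one_sub_apply_unipotent (hb : b ≠ 1) :
    ∑ χ : Irr SL(2, F), (χ.1 1 - χ.1 (unipotent b)) ^ 2 = (Nat.card F : ℂ) ^ 3 := by
  have hu := (map_ne_one_iff unipotent unipotent_injective).mpr hb
  have hinv : (unipotent b)⁻¹ = unipotent b := inv_eq_of_mul_eq_one_left (unipotent_mul_self b)
  have h11 : ∑ χ : Irr SL(2, F), χ.1 1 * χ.1 1 = Nat.card SL(2, F) := by
    have htop : Subgroup.centralizer {(1 : SL(2, F))} = ⊤ := by simp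
    simpa [IsConj.refl, htop] using Irr.sum_inv_mul (1 : SL(2, F)) 1
  have h1u : ∑ χ : Irr SL(2, F), χ.1 1 * χ.1 (unipotent b) = 0 := by
    simpa only [inv_one, isConj_one_right.not.mpr hu, if_false] using
      Irr.sum_inv_mul (unipotent b) 1
  have huu : ∑ χ : Irr SL(2, F), χ.1 (unipotent b) * χ.1 (unipotent b) = Nat.card F := by
    simpa only [hinv, IsConj.refl, card_centralizer_unipotent hb, if_true] using
      Irr.sum_inv_mul (unipotent b) (unipotent b)
  have hG : (Nat.card SL(2, F) + Nat.card F : ℂ) = Nat.card F ^ 3 := mod_cast card_SL_two_add_card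
  have hsq (χ : Irr SL(2, F)) : (χ.1 1 - χ.1 (unipotent b)) ^ 2 = χ.1 1 * χ.1 1 -
      2 * (χ.1 1 * χ.1 (unipotent b)) + χ.1 (unipotent b) * χ.1 (unipotent b) := by ring
  simp only [hsq, Finset.sum_add_distrib, Finset.sum_sub_distrib, ← Finset.mul_sum, h11, h1u, huu]
  linear_combination hG

theorem Irr.apply_one_eq_apply_unipotent_add_card {χ : SL(2, F) → ℂ} (hχ : χ ∈ Irr SL(2, F))
    (hχ1 : χ ≠ 1) (hb : b ≠ 1) : χ 1 = χ (unipotent b) + Nat.card F := by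
  classical
  choose l c hu h1 hc _ using fun χ : Irr SL(2, F) => Irr.exists_apply_unipotent_eq χ.2 hb
  let e : Irr SL(2, F) := ⟨1, Irr.one_mem⟩
  have hce (ψ : Irr SL(2, F)) (hψ : ψ ∈ Finset.univ.erase e) : 1 ≤ c ψ ^ 2 :=
    Nat.one_le_pow _ _ (Nat.pos_of_ne_zero fun h0 =>
      Finset.ne_of_mem_erase hψ (Subtype.ext (hc ψ h0)))
  have hcard : (Finset.univ.erase e).card = Nat.card F := by
    rw [Finset.card_erase_of_mem (Finset.mem_univ e), Finset.card_univ, Irr.card_eq,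
      card_conjClasses_SL_two, Nat.add_sub_cancel]
  have hsum : ∑ ψ, c ψ ^ 2 = Nat.card F := by
    have hsq := Irr.sum_sq_apply_one_sub_apply_unipotent hb
    simp only [h1, hu, add_sub_cancel_left, mul_pow, ← Finset.mul_sum] at hsq
    rw [pow_succ (Nat.card F : ℂ) 2] at hsq
    have hsum := mul_left_cancel₀ (pow_ne_zero 2 (NeZero.ne _)) hsq
    exact_mod_cast hsum
  have hle : ∑ ψ ∈ Finset.univ.erase e, c ψ ^ 2 ≤ ∑ ψ ∈ Finset.univ.erase e, 1 := by
    rw [Finset.sum_const, hcard, smul_eq_mul, mul_one, ← hsum]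
    exact Finset.sum_le_sum_of_subset (Finset.erase_subset _ _)
  have heq := (Finset.sum_eq_sum_iff_of_le hce).mp (le_antisymm (Finset.sum_le_sum hce) hle)
    ⟨χ, hχ⟩ (Finset.mem_erase.mpr ⟨fun h => hχ1 (congrArg Subtype.val h), Finset.mem_univ _⟩)
  have hc1 : c ⟨χ, hχ⟩ = 1 := Nat.pow_eq_one.mp heq.symm |>.resolve_right two_ne_zero
  have hχd := h1 ⟨χ, hχ⟩
  rwa [← hu, hc1, Nat.cast_one, mul_one] at hχd

theorem Irr.apply_unipotent_eq_zero_or {χ : SL(2, F) → ℂ} (hχ : χ ∈ Irr SL(2, F)) (hb : b ≠ 1) :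
    χ (unipotent b) = 0 ∨ χ (unipotent b) = 1 ∨ χ (unipotent b) = -1 := by
  rcases eq_or_ne χ 1 with rfl | hχ1
  · exact .inr (.inl rfl)
  obtain ⟨l, c, hu, h1, -, hl⟩ := Irr.exists_apply_unipotent_eq hχ hb
  have hc : c = 1 := by
    rw [Irr.apply_one_eq_apply_unipotent_add_card hχ hχ1 hb, hu] at h1
    exact mod_cast (mul_eq_left₀ (NeZero.ne (Nat.card F : ℂ))).mp (add_left_cancel h1).symm
  subst hc
  have hl2 : l ≤ 2 := by
    by_contra! h
    have := hl (by omega)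
    omega
  rw [hu]
  interval_cases l <;> norm_num

theorem Irr.existsUnique_apply_unipotent_eq_zero (hb : b ≠ 1) :
    ∃! χ : Irr SL(2, F), χ.1 (unipotent b) = 0 := by
  classical
  have hsum : ∑ χ : Irr SL(2, F), (1 - χ.1 (unipotent b) ^ 2) = 1 := by
    have hsq (χ : Irr SL(2, F)) : χ.1 (unipotent b)⁻¹ * χ.1 (unipotent b) =
        χ.1 (unipotent b) ^ 2 := by
      rw [inv_eq_of_mul_eq_one_left (unipotent_mul_self b), sq]
    have hcol := Irr.sum_inv_mul (unipotent b) (unipotent b)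
    rw [if_pos (IsConj.refl _), card_centralizer_unipotent hb] at hcol
    simp only [Finset.sum_sub_distrib, ← hsq, hcol, Finset.sum_const, Finset.card_univ,
      Irr.card_eq, card_conjClasses_SL_two, nsmul_eq_mul, mul_one, Nat.cast_add, Nat.cast_one,
      add_sub_cancel_left]
  have hind (χ : Irr SL(2, F)) :
      1 - χ.1 (unipotent b) ^ 2 = if χ.1 (unipotent b) = 0 then 1 else 0 := by
    rcases Irr.apply_unipotent_eq_zero_or χ.2 hb with h | h | h <;> simp [h]
  simp only [hind, Finset.sum_boole, Nat.cast_eq_one, Finset.card_eq_one] at hsum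
  obtain ⟨χ, hχ⟩ := hsum
  simp only [Finset.ext_iff, Finset.mem_filter_univ, Finset.mem_singleton] at hχ
  exact ⟨χ, (hχ χ).mpr rfl, fun ψ hψ => (hχ ψ).mp hψ⟩

theorem Irr.exists_odd_apply_one_eq {χ : SL(2, F) → ℂ} (hχ : χ ∈ Irr SL(2, F)) (hb : b ≠ 1)
    (h0 : χ (unipotent b) ≠ 0) : ∃ d : ℕ, Odd d ∧ χ 1 = d := by
  rcases eq_or_ne χ 1 with rfl | hχ1
  · exact ⟨1, odd_one, by simp⟩
  have hq : Even (Nat.card F) := by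
    have := Fintype.ofFinite F
    rw [Nat.card_eq_fintype_card, Nat.even_iff]
    exact FiniteField.even_card_of_char_two (ringChar.eq F 2)
  rw [Irr.apply_one_eq_apply_unipotent_add_card hχ hχ1 hb]
  rcases (Irr.apply_unipotent_eq_zero_or hχ hb).resolve_left h0 with h | h <;> rw [h]
  · exact ⟨Nat.card F + 1, hq.add_one, by push_cast; ring⟩
  · exact ⟨Nat.card F - 1, Nat.Even.sub_odd Nat.card_pos hq odd_one,
      by rw [Nat.cast_sub Nat.card_pos, Nat.cast_one]; ring⟩

end UnipotentCharacterValues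

theorem sl2_even_characters_general {F : Type} [Field F] [Finite F] [CharP F 2]
    {P : Subgroup SL(2, F)} (hP : IsPGroup 2 P) {x : SL(2, F)} (hx : x ∈ P) (hx1 : x ≠ 1) :
    (∀ a ∈ P, ∀ b ∈ P, a ≠ 1 → b ≠ 1 → IsConj a b) ∧
      ∃ χ₀ ∈ Irr SL(2, F),
        χ₀ x = 0 ∧ χ₀ 1 = (Nat.card F : ℂ) ∧
        (∀ χ ∈ Irr SL(2, F), χ x = 0 → χ = χ₀) ∧
        (∀ χ ∈ Irr SL(2, F), χ ≠ χ₀ →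
          (∃ d : ℕ, Odd d ∧ χ 1 = (d : ℂ)) ∧ (χ x = 1 ∨ χ x = -1)) := by
  have htr {g : SL(2, F)} (hg : g ∈ P) := trace_eq_zero_of_isPGroup hP hg
  refine ⟨fun a ha b hb ha1 hb1 => isConj_of_trace_eq ha1 hb1 ((htr ha).trans (htr hb).symm), ?_⟩
  have hb : Multiplicative.ofAdd (1 : F) ≠ 1 := one_ne_zero (α := F)
  have hval {χ : SL(2, F) → ℂ} (hχ : χ ∈ Irr SL(2, F)) : χ x = χ (unipotent (.ofAdd 1)) :=
    (Irr.apply_eq_of_isConj hχ (isConj_unipotent hb hx1 (htr hx))).symm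
  obtain ⟨χ₀, h0, hunique⟩ := Irr.existsUnique_apply_unipotent_eq_zero hb
  have hχ₀1 : χ₀.1 ≠ 1 := fun h => by simp [h] at h0
  have huniq (χ) (hχ : χ ∈ Irr SL(2, F)) (h : χ x = 0) : χ = χ₀ :=
    congrArg Subtype.val (hunique ⟨χ, hχ⟩ ((hval hχ).symm.trans h))
  refine ⟨χ₀, χ₀.2, (hval χ₀.2).trans h0, ?_, huniq, fun χ hχ hne => ?_⟩
  · rw [Irr.apply_one_eq_apply_unipotent_add_card χ₀.2 hχ₀1 hb, h0, zero_add]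
  · have hχ0 := hval hχ ▸ fun h => hne (huniq χ hχ h)
    exact ⟨Irr.exists_odd_apply_one_eq hχ hb hχ0,
      hval hχ ▸ (Irr.apply_unipotent_eq_zero_or hχ hb).resolve_left hχ0⟩

/-- Let `q = 2^n ≥ 4`, let `G = SL₂(F_q)`, let `P` be a Sylow `2`-subgroup of `G` and
let `1 ≠ x ∈ P`.  Then (1) any two nonidentity elements of `P` are conjugate in `G`;
(2) there is exactly one irreducible complex character of `G` vanishing at `x`, and it
has degree `q`; (3) every other irreducible complex character of `G` has odd degree and
takes the value `1` or `-1` at `x`. -/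
theorem sl2_even_characters (n q : ℕ) (hq : q = 2 ^ n) (hq4 : 4 ≤ q)
    (F : Type) [Field F] [Fintype F] (hF : Fintype.card F = q)
    (P : Sylow 2 (SpecialLinearGroup (Fin 2) F))
    (x : SpecialLinearGroup (Fin 2) F) (hx : x ∈ P) (hx1 : x ≠ 1) :
    (∀ a ∈ P, ∀ b ∈ P, a ≠ 1 → b ≠ 1 → IsConj a b) ∧
      ∃ χ₀ ∈ Irr (SpecialLinearGroup (Fin 2) F),
        χ₀ x = 0 ∧ χ₀ 1 = (q : ℂ) ∧
        (∀ χ ∈ Irr (SpecialLinearGroup (Fin 2) F), χ x = 0 → χ = χ₀) ∧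
        (∀ χ ∈ Irr (SpecialLinearGroup (Fin 2) F), χ ≠ χ₀ →
          (∃ d : ℕ, Odd d ∧ χ 1 = (d : ℂ)) ∧ (χ x = 1 ∨ χ x = -1)) := by
  subst hF
  have : Fact (Nat.Prime 2) := ⟨Nat.prime_two⟩
  have : CharP F 2 := charP_of_card_eq_prime_pow hq
  rw [← Nat.card_eq_fintype_card]
  exact sl2_even_characters_general P.isPGroup' hx hx1
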